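/- arXiv:1607.03292 — 5 statements merged into one kernel-verified Lean document; each statement's English description precedes it below -/
import Mathlib

section
/- For points p and q in the root square and d ∈ ℕ, the following are equivalent: (i) the routing sequences of p and q agree at every step i < d; (ii) q ∈ R_d(p); (iii) R_d(p) = R_d(q). -/
/-- The four quadrant directions. -/
inductive Dir : Type
  | nw | ne | sw | se
  deriving DecidableEq

noncomputable section

/-- A half-open square `[x, x+w) × [y, y+w)` given by its corner `(x, y)` and side `w`. -/
structure Sq where
  x : ℝ
  y : ℝ
  w : ℝ

/-- The set of points of a half-open square. -/
def Sq.set (R : Sq) : Set (ℝ × ℝ) :=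
  {p : ℝ × ℝ | R.x ≤ p.1 ∧ p.1 < R.x + R.w ∧ R.y ≤ p.2 ∧ p.2 < R.y + R.w}

/-- The quadrant of a square in a given direction: a half-open square of side `w/2`. -/
def Sq.quad (R : Sq) : Dir → Sq
  | .nw => ⟨R.x, R.y, R.w / 2⟩
  | .ne => ⟨R.x + R.w / 2, R.y, R.w / 2⟩
  | .sw => ⟨R.x, R.y + R.w / 2, R.w / 2⟩
  | .se => ⟨R.x + R.w / 2, R.y + R.w / 2, R.w / 2⟩

/-- The direction (routing quadrant) of a point `p` in the square `R`. -/
def Sq.dirOf (R : Sq) (p : ℝ × ℝ) : Dir :=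
  if p.1 < R.x + R.w / 2 then
    if p.2 < R.y + R.w / 2 then .nw else .sw
  else
    if p.2 < R.y + R.w / 2 then .ne else .se

/-- The square reached after `d` routing steps for the point `p`, starting from the root
square `R` (so `routeSq R p 0 = R`). -/
def routeSq (R : Sq) (p : ℝ × ℝ) : ℕ → Sq
  | 0 => R
  | n + 1 => (routeSq R p n).quad ((routeSq R p n).dirOf p)

/-- The `n`-th element of the routing sequence of `p`, i.e. the direction taken at step `n`. -/
def routeDir (R : Sq) (p : ℝ × ℝ) (n : ℕ) : Dir :=
  (routeSq R p n).dirOf p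

theorem Sq.mem_quad_dirOf (R : Sq) (p : ℝ × ℝ) (hp : p ∈ R.set) :
    p ∈ (R.quad (R.dirOf p)).set := by
  obtain ⟨h1, h2, h3, h4⟩ := hp
  unfold Sq.dirOf
  split_ifs <;> simp only [Sq.quad, Sq.set, Set.mem_setOf_eq] <;>
    refine ⟨?_, ?_, ?_, ?_⟩ <;> linarith

theorem Sq.of_mem_quad (R : Sq) (hw : 0 < R.w) (q : ℝ × ℝ) (e : Dir)
    (hq : q ∈ (R.quad e).set) : q ∈ R.set ∧ R.dirOf q = e := by
  cases e <;> obtain ⟨h1, h2, h3, h4⟩ := hq <;> simp only [Sq.quad] at h1 h2 h3 h4 <;>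
    refine ⟨⟨by linarith, by linarith, by linarith, by linarith⟩, ?_⟩ <;>
    unfold Sq.dirOf <;> split_ifs <;> first | rfl | (exfalso; linarith)

theorem routeSq_w_pos (R : Sq) (hw : 0 < R.w) (p : ℝ × ℝ) (d : ℕ) :
    0 < (routeSq R p d).w := by
  induction d with
  | zero => exact hw
  | succ n ih =>
    simp only [routeSq]
    cases (routeSq R p n).dirOf p <;> simp only [Sq.quad] <;> linarith

theorem mem_routeSq_self (R : Sq) (p : ℝ × ℝ) (hp : p ∈ R.set) (d : ℕ) :
    p ∈ (routeSq R p d).set := by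
  induction d with
  | zero => exact hp
  | succ n ih => exact Sq.mem_quad_dirOf _ _ ih

theorem routeSq_eq_of_agree (R : Sq) (p q : ℝ × ℝ) (d : ℕ)
    (h : ∀ i < d, routeDir R p i = routeDir R q i) : routeSq R p d = routeSq R q d := by
  induction d with
  | zero => rfl
  | succ n ih =>
    have h1 := ih fun i hi => h i (by omega)
    have h2 := h n (by omega)
    unfold routeDir at h2
    simp only [routeSq]
    rw [h2, h1]

theorem agree_of_mem (R : Sq) (hw : 0 < R.w) (p q : ℝ × ℝ) (d : ℕ)
    (h : q ∈ (routeSq R p d).set) : ∀ i < d, routeDir R p i = routeDir R q i := by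
  induction d with
  | zero => intro i hi; omega
  | succ n ih =>
    obtain ⟨h1, h2⟩ := Sq.of_mem_quad _ (routeSq_w_pos R hw p n) _ _ h
    have h3 := ih h1
    intro i hi
    rcases Nat.lt_succ_iff_lt_or_eq.mp hi with hi | rfl
    · exact h3 i hi
    · unfold routeDir
      rw [← routeSq_eq_of_agree R p q i h3, h2]

/-- For points `p` and `q` in the root square and `d ∈ ℕ`, the following are
equivalent: (i) the routing sequences of `p` and `q` agree at every step `i < d`;
(ii) `q ∈ R_d(p)`; (iii) `R_d(p) = R_d(q)`. -/
theorem routing_agree_iff_mem_iff_eq (x₀ y₀ w : ℝ) (hw : 0 < w) (p q : ℝ × ℝ)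
    (hp : p ∈ (Sq.mk x₀ y₀ w).set) (hq : q ∈ (Sq.mk x₀ y₀ w).set) (d : ℕ) :
    ((∀ i < d, routeDir (Sq.mk x₀ y₀ w) p i = routeDir (Sq.mk x₀ y₀ w) q i) ↔
      q ∈ (routeSq (Sq.mk x₀ y₀ w) p d).set) ∧
    (q ∈ (routeSq (Sq.mk x₀ y₀ w) p d).set ↔
      routeSq (Sq.mk x₀ y₀ w) p d = routeSq (Sq.mk x₀ y₀ w) q d) := by
  have self := mem_routeSq_self (Sq.mk x₀ y₀ w) q hq d
  have a := agree_of_mem (Sq.mk x₀ y₀ w) hw p q d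
  have b := routeSq_eq_of_agree (Sq.mk x₀ y₀ w) p q d
  have c : routeSq (Sq.mk x₀ y₀ w) p d = routeSq (Sq.mk x₀ y₀ w) q d →
      q ∈ (routeSq (Sq.mk x₀ y₀ w) p d).set := fun h => h ▸ self
  exact ⟨⟨fun h => c (b h), a⟩, ⟨fun h => b (a h), c⟩⟩
end
end

section
/- Let p ≠ q be points in the root square and let δ = max(|px − qx|, |py − qy|) > 0. Then (i) for every d ∈ ℕ with w/2^d ≤ δ one has R_d(p) ≠ R_d(q), i.e., the routing paths of p and q have diverged by depth d; and (ii) the least divergence depth d₀ (the least d with R_d(p) ≠ R_d(q)) satisfies δ < w/2^{d₀−1}. -/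
noncomputable section

theorem routeSq_w (R : Sq) (p : ℝ × ℝ) (n : ℕ) : (routeSq R p n).w = R.w / 2 ^ n := by
  induction n with
  | zero => simp [routeSq]
  | succ n ih =>
    have h : (routeSq R p (n + 1)).w = (routeSq R p n).w / 2 := by
      simp only [routeSq]
      cases (routeSq R p n).dirOf p <;> rfl
    rw [h, ih, pow_succ, div_div]

theorem mem_routeSq (R : Sq) (p : ℝ × ℝ) (hp : p ∈ R.set) (n : ℕ) :
    p ∈ (routeSq R p n).set := by
  induction n with
  | zero => exact hp
  | succ n ih =>
    simp only [routeSq]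
    generalize routeSq R p n = S at ih
    obtain ⟨h1, h2, h3, h4⟩ := ih
    unfold Sq.dirOf
    split_ifs <;> simp only [Sq.quad, Sq.set, Set.mem_setOf_eq] <;>
      refine ⟨?_, ?_, ?_, ?_⟩ <;> linarith

theorem dist_lt_of_routeSq_eq (R : Sq) (p q : ℝ × ℝ) (hp : p ∈ R.set) (hq : q ∈ R.set) (n : ℕ)
    (h : routeSq R p n = routeSq R q n) :
    max |p.1 - q.1| |p.2 - q.2| < R.w / 2 ^ n := by
  have h1 := mem_routeSq R p hp n
  have h2 := mem_routeSq R q hq n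
  rw [← h] at h2
  rw [← routeSq_w R p n]
  obtain ⟨a1, a2, a3, a4⟩ := h1
  obtain ⟨b1, b2, b3, b4⟩ := h2
  refine max_lt ?_ ?_ <;> rw [abs_lt] <;> constructor <;> linarith

/-- Let `p ≠ q` be points in the root square and
`δ = max(|px − qx|, |py − qy|) > 0`.  Then (i) for every `d` with `w/2^d ≤ δ` one has
`R_d(p) ≠ R_d(q)` (the routing paths have diverged by depth `d`); and (ii) the least
divergence depth `d₀` satisfies `δ < w/2^{d₀−1}`. -/
theorem divergence_depth_bounds (x₀ y₀ w : ℝ) (hw : 0 < w) (p q : ℝ × ℝ)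
    (hp : p ∈ (Sq.mk x₀ y₀ w).set) (hq : q ∈ (Sq.mk x₀ y₀ w).set) (hpq : p ≠ q)
    (hδ : 0 < max |p.1 - q.1| |p.2 - q.2|) :
    (∀ d : ℕ, w / 2 ^ d ≤ max |p.1 - q.1| |p.2 - q.2| →
      routeSq (Sq.mk x₀ y₀ w) p d ≠ routeSq (Sq.mk x₀ y₀ w) q d) ∧
    (∀ d₀ : ℕ,
      (routeSq (Sq.mk x₀ y₀ w) p d₀ ≠ routeSq (Sq.mk x₀ y₀ w) q d₀ ∧
        ∀ d < d₀, routeSq (Sq.mk x₀ y₀ w) p d = routeSq (Sq.mk x₀ y₀ w) q d) →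
      max |p.1 - q.1| |p.2 - q.2| < w / 2 ^ (d₀ - 1)) := by
  refine ⟨fun d hd h => ?_, fun d₀ h => ?_⟩
  · exact absurd (dist_lt_of_routeSq_eq _ p q hp hq d h) (not_lt.mpr hd)
  · obtain ⟨hne, hlt⟩ := h
    have hpos : d₀ ≠ 0 := by
      rintro rfl
      exact hne rfl
    exact dist_lt_of_routeSq_eq _ p q hp hq (d₀ - 1) (hlt _ (by omega))
end
end

section
/- The shape of a region quadtree is independent of the order of insertions: if l₁ and l₂ are duplicate-free lists of points of a half-open square R of side w > 0 such that l₂ is a permutation of l₁, then folding insert over l₁ starting from Empty yields the same tree as folding insert over l₂ starting from Empty. -/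
noncomputable section

/-- A region quadtree: `empty`, a `leaf` storing a key, or an `internal` node with four
children (nw, ne, sw, se). -/
inductive QTree : Type
  | empty : QTree
  | leaf (p : ℝ × ℝ) : QTree
  | internal (nw ne sw se : QTree) : QTree
  deriving DecidableEq

/-- The child of a tree in a given direction (for internal nodes). -/
def QTree.child : QTree → Dir → QTree
  | .internal a _ _ _, .nw => a
  | .internal _ b _ _, .ne => b
  | .internal _ _ c _, .sw => c
  | .internal _ _ _ e, .se => e
  | _, _ => .empty

/-- The set of keys appearing in the leaf nodes of a quadtree. -/
def QTree.keys : QTree → Set (ℝ × ℝ)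
  | .empty => ∅
  | .leaf p => {p}
  | .internal a b c e => a.keys ∪ b.keys ∪ c.keys ∪ e.keys

/-- `WF t R`: the tree `t` is well-formed for the half-open square `R`: an `empty` tree is
well-formed; a leaf is well-formed if its key lies in `R`; an internal node is well-formed if
each child is well-formed for the corresponding quadrant of `R`. -/
inductive WF : QTree → Sq → Prop
  | empty (R : Sq) : WF .empty R
  | leaf (p : ℝ × ℝ) (R : Sq) (hp : p ∈ R.set) : WF (.leaf p) R
  | internal (a b c e : QTree) (R : Sq)
      (ha : WF a (R.quad .nw)) (hb : WF b (R.quad .ne))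
      (hc : WF c (R.quad .sw)) (he : WF e (R.quad .se)) :
      WF (.internal a b c e) R

/-- The internal node whose child in direction `d` is `f d`. -/
def mkNode (f : Dir → QTree) : QTree :=
  .internal (f .nw) (f .ne) (f .sw) (f .se)

/-- Fuelled version of `split`: given fuel `n + 1`, if `p` and `q` lie in different quadrants
of `R`, return the internal node with `leaf p` and `leaf q` in their respective quadrants and
`empty` elsewhere; otherwise recurse (with fuel `n`) into the common quadrant containing `p`
and `q`, placing `empty` elsewhere. -/
def splitFuel : ℕ → ℝ × ℝ → ℝ × ℝ → Sq → QTree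
  | 0, _, _, _ => .empty
  | n + 1, p, q, R =>
    if R.dirOf p = R.dirOf q then
      mkNode fun d => if d = R.dirOf p then splitFuel n p q (R.quad (R.dirOf p)) else .empty
    else
      mkNode fun d =>
        if d = R.dirOf p then .leaf p else if d = R.dirOf q then .leaf q else .empty

open Classical in
/-- Enough fuel for the recursion defining `split p q R`: one more than the first depth
(along the routing path of `p`) at which `p` and `q` take different directions. -/
def splitDepth (p q : ℝ × ℝ) (R : Sq) : ℕ :=
  if h : ∃ n : ℕ, (routeSq R p n).dirOf p ≠ (routeSq R p n).dirOf q then Nat.find h + 1 else 0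

/-- `split p q R`, the region quadtree containing exactly the two distinct keys `p, q ∈ R`,
defined by the recursion described above (realized via the fuelled function with enough
fuel for the recursion to have terminated). -/
def split (p q : ℝ × ℝ) (R : Sq) : QTree :=
  splitFuel (splitDepth p q R) p q R

/-- Insertion of a key `p` into a quadtree well-formed for the region `R`. -/
def qinsert (p : ℝ × ℝ) : QTree → Sq → QTree
  | .empty, _ => .leaf p
  | .leaf q, R => if q = p then .leaf p else split p q R
  | .internal a b c e, R =>
    match R.dirOf p with
    | .nw => .internal (qinsert p a (R.quad .nw)) b c e
    | .ne => .internal a (qinsert p b (R.quad .ne)) c e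
    | .sw => .internal a b (qinsert p c (R.quad .sw)) e
    | .se => .internal a b c (qinsert p e (R.quad .se))

/-- The subtree of `t` at a direction sequence (defined only when the path exists). -/
def subtreeAt : QTree → List Dir → Option QTree
  | t, [] => some t
  | .internal a b c e, d :: s =>
    match d with
    | .nw => subtreeAt a s
    | .ne => subtreeAt b s
    | .sw => subtreeAt c s
    | .se => subtreeAt e s
  | .empty, _ :: _ => none
  | .leaf _, _ :: _ => none

inductive QSep (p q : ℝ × ℝ) : Sq → Prop
  | here (R : Sq) (h : R.dirOf p ≠ R.dirOf q) : QSep p q R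
  | there (R : Sq) (h : R.dirOf p = R.dirOf q) (h' : QSep p q (R.quad (R.dirOf p))) : QSep p q R

theorem mem_quad {R : Sq} {p : ℝ × ℝ} (hp : p ∈ R.set) : p ∈ (R.quad (R.dirOf p)).set := by
  obtain ⟨h1, h2, h3, h4⟩ := hp
  unfold Sq.dirOf
  split_ifs <;> simp only [Sq.quad, Sq.set, Set.mem_ofPred_eq] <;>
    refine ⟨?_, ?_, ?_, ?_⟩ <;> linarith

theorem quad_w (R : Sq) (d : Dir) : (R.quad d).w = R.w / 2 := by
  cases d <;> rfl

theorem sep_aux (p q : ℝ × ℝ) (n : ℕ) : ∀ R : Sq, p ∈ R.set → q ∈ R.set →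
    R.w < 2 ^ n * max |p.1 - q.1| |p.2 - q.2| → QSep p q R := by
  induction n with
  | zero =>
    intro R hp hq h
    exfalso
    obtain ⟨h1, h2, h3, h4⟩ := hp
    obtain ⟨g1, g2, g3, g4⟩ := hq
    have : max |p.1 - q.1| |p.2 - q.2| < R.w := by
      apply max_lt <;> rw [abs_lt] <;> constructor <;> linarith
    linarith
  | succ n ih =>
    intro R hp hq h
    by_cases hd : R.dirOf p = R.dirOf q
    · refine .there R hd (ih _ (mem_quad hp) (hd ▸ mem_quad hq) ?_)
      rw [quad_w]
      rw [pow_succ] at h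
      linarith
    · exact .here R hd

theorem sep_of_ne {p q : ℝ × ℝ} {R : Sq} (hp : p ∈ R.set) (hq : q ∈ R.set) (h : p ≠ q) :
    QSep p q R := by
  have hpos : 0 < max |p.1 - q.1| |p.2 - q.2| := by
    by_contra hc
    apply h
    have h1 := le_max_left |p.1 - q.1| |p.2 - q.2|
    have h2 := le_max_right |p.1 - q.1| |p.2 - q.2|
    have a1 : |p.1 - q.1| = 0 := le_antisymm (by linarith) (abs_nonneg _)
    have a2 : |p.2 - q.2| = 0 := le_antisymm (by linarith) (abs_nonneg _)
    rw [abs_eq_zero, sub_eq_zero] at a1 a2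
    exact Prod.ext a1 a2
  obtain ⟨n, hn⟩ := pow_unbounded_of_one_lt (R.w / max |p.1 - q.1| |p.2 - q.2|)
    (one_lt_two : (1 : ℝ) < 2)
  exact sep_aux p q n R hp hq ((div_lt_iff₀ hpos).1 hn)

theorem routeSq_succ (R : Sq) (p : ℝ × ℝ) (n : ℕ) :
    routeSq R p (n + 1) = routeSq (R.quad (R.dirOf p)) p n := by
  induction n with
  | zero => rfl
  | succ n ih => rw [routeSq, ih]; rfl

theorem sep_exists {p q : ℝ × ℝ} {R : Sq} (h : QSep p q R) :
    ∃ n : ℕ, (routeSq R p n).dirOf p ≠ (routeSq R p n).dirOf q := by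
  induction h with
  | here R h => exact ⟨0, h⟩
  | there R h h' ih =>
    obtain ⟨n, hn⟩ := ih
    exact ⟨n + 1, by rw [routeSq_succ]; exact hn⟩

theorem depth_here {p q : ℝ × ℝ} {R : Sq} (h : R.dirOf p ≠ R.dirOf q) :
    splitDepth p q R = 1 := by
  classical
  have he : ∃ n : ℕ, (routeSq R p n).dirOf p ≠ (routeSq R p n).dirOf q := ⟨0, h⟩
  unfold splitDepth
  rw [dif_pos he]
  rw [(Nat.find_eq_zero he).2 h]

theorem depth_there {p q : ℝ × ℝ} {R : Sq} (h : R.dirOf p = R.dirOf q)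
    (h' : QSep p q (R.quad (R.dirOf p))) :
    splitDepth p q R = splitDepth p q (R.quad (R.dirOf p)) + 1 := by
  classical
  have he := sep_exists h'
  have he2 := sep_exists (QSep.there R h h')
  unfold splitDepth
  rw [dif_pos he, dif_pos he2]
  congr 1
  rw [Nat.find_eq_iff]
  constructor
  · rw [routeSq_succ]; exact Nat.find_spec he
  · intro m hm
    cases m with
    | zero => exact fun hc => hc h
    | succ m =>
      rw [routeSq_succ]
      exact Nat.find_min he (by omega)

theorem qinsert_mkNode (p : ℝ × ℝ) (f : Dir → QTree) (R : Sq) :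
    qinsert p (mkNode f) R = mkNode (Function.update f (R.dirOf p)
      (qinsert p (f (R.dirOf p)) (R.quad (R.dirOf p)))) := by
  rw [mkNode, qinsert]
  cases h : R.dirOf p <;> simp [mkNode, Function.update]

theorem split_eq {p q : ℝ × ℝ} {R : Sq} (hp : p ∈ R.set) (hq : q ∈ R.set) (h : p ≠ q) :
    split p q R = qinsert p (qinsert q (mkNode fun _ => .empty) R) R := by
  rw [qinsert_mkNode, qinsert_mkNode]
  unfold split
  cases sep_of_ne hp hq h with
  | here _ h =>
    rw [depth_here h, splitFuel, if_neg h]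
    congr 1
    funext d
    simp only [Function.update_apply, if_neg h, qinsert]
  | there _ hd h' =>
    rw [depth_there hd h', splitFuel, if_pos hd]
    congr 1
    funext d
    rw [← hd]
    simp only [Function.update_apply, qinsert, if_true, if_neg h.symm, split]
    split_ifs <;> rfl

theorem exists_mkNode (a b c e : QTree) : ∃ f, QTree.internal a b c e = mkNode f :=
  ⟨fun d => match d with | .nw => a | .ne => b | .sw => c | .se => e, rfl⟩

theorem wf_mkNode {f : Dir → QTree} {R : Sq} : WF (mkNode f) R ↔ ∀ d, WF (f d) (R.quad d) := by
  constructor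
  · rintro (_ | _ | ⟨_, _, _, _, _, ha, hb, hc, he⟩) d
    cases d <;> assumption
  · intro h
    exact .internal _ _ _ _ _ (h _) (h _) (h _) (h _)

theorem wf_update {p : ℝ × ℝ} {f : Dir → QTree} {R : Sq} (hf : WF (mkNode f) R)
    (h : WF (qinsert p (f (R.dirOf p)) (R.quad (R.dirOf p))) (R.quad (R.dirOf p))) :
    WF (qinsert p (mkNode f) R) R := by
  rw [qinsert_mkNode, wf_mkNode]
  intro d
  by_cases hd : d = R.dirOf p
  · subst hd; simpa using h
  · rw [Function.update_of_ne hd]; exact wf_mkNode.1 hf d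

theorem wf_nil (R : Sq) : WF (mkNode fun _ => .empty) R := wf_mkNode.2 fun _ => .empty _

theorem wf_insert_nil {q : ℝ × ℝ} {R : Sq} (hq : q ∈ R.set) :
    WF (qinsert q (mkNode fun _ => .empty) R) R :=
  wf_update (wf_nil R) (by rw [qinsert]; exact .leaf _ _ (mem_quad hq))

theorem wf_insert_leaf {p q : ℝ × ℝ} {R : Sq} (hs : QSep p q R) (hp : p ∈ R.set) (hq : q ∈ R.set)
    (h : p ≠ q) : WF (qinsert p (.leaf q) R) R := by
  induction hs with
  | here R hd =>
    rw [qinsert, if_neg h.symm, split_eq hp hq h]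
    have := wf_insert_nil hq
    rw [qinsert_mkNode] at this ⊢
    refine wf_update this ?_
    rw [Function.update_of_ne hd, qinsert]
    exact .leaf _ _ (mem_quad hp)
  | there R hd h' ih =>
    rw [qinsert, if_neg h.symm, split_eq hp hq h]
    have := wf_insert_nil hq
    rw [qinsert_mkNode] at this ⊢
    refine wf_update this ?_
    have := ih (mem_quad hp) (hd ▸ mem_quad hq)
    rw [← hd, Function.update_self]
    exact this

theorem wf_insert {p : ℝ × ℝ} (t : QTree) : ∀ {R : Sq}, p ∈ R.set → WF t R →
    WF (qinsert p t R) R := by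
  intro R hp ht
  induction ht with
  | empty R => exact .leaf _ _ hp
  | leaf q R hq =>
    by_cases h : p = q
    · subst h; rw [qinsert, if_pos rfl]; exact .leaf _ _ hp
    · exact wf_insert_leaf (sep_of_ne hp hq h) hp hq h
  | internal a b c e R ha hb hc he iha ihb ihc ihe =>
    have hm := mem_quad hp
    rw [qinsert]
    cases hd : R.dirOf p <;> rw [hd] at hm <;> constructor <;> first | assumption | (apply_assumption; assumption)

/-- Commutation at a node, reduced to the child. -/
theorem comm_node {p q : ℝ × ℝ} {f : Dir → QTree} {R : Sq}
    (h : R.dirOf p = R.dirOf q →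
      qinsert p (qinsert q (f (R.dirOf p)) (R.quad (R.dirOf p))) (R.quad (R.dirOf p)) =
      qinsert q (qinsert p (f (R.dirOf p)) (R.quad (R.dirOf p))) (R.quad (R.dirOf p))) :
    qinsert p (qinsert q (mkNode f) R) R = qinsert q (qinsert p (mkNode f) R) R := by
  simp only [qinsert_mkNode]
  congr 1
  by_cases hd : R.dirOf p = R.dirOf q
  · rw [← hd]
    simp [h hd]
  · rw [Function.update_of_ne hd, Function.update_of_ne (Ne.symm hd), Function.update_comm hd]

theorem split_symm {p q : ℝ × ℝ} {R : Sq} (hs : QSep p q R) (hp : p ∈ R.set) (hq : q ∈ R.set)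
    (h : p ≠ q) : split p q R = split q p R := by
  induction hs with
  | here R hd =>
    rw [split_eq hp hq h, split_eq hq hp h.symm]
    exact comm_node fun hc => absurd hc hd
  | there R hd h' ih =>
    rw [split_eq hp hq h, split_eq hq hp h.symm]
    refine comm_node fun _ => ?_
    simp only [qinsert, if_neg h, if_neg h.symm]
    exact ih (mem_quad hp) (hd ▸ mem_quad hq)

/-- Reinserting a key of a two-point tree does nothing. -/
theorem insert_split {p q : ℝ × ℝ} {R : Sq} (hs : QSep p q R) (hp : p ∈ R.set) (hq : q ∈ R.set)
    (h : p ≠ q) : qinsert p (split p q R) R = split p q R := by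
  induction hs with
  | here R hd =>
    rw [split_eq hp hq h]
    simp only [qinsert_mkNode]
    simp [Function.update_of_ne hd, qinsert]
  | there R hd h' ih =>
    have := ih (mem_quad hp) (hd ▸ mem_quad hq)
    rw [split_eq hp hq h]
    simp only [qinsert_mkNode]
    rw [← hd]
    simp [qinsert, h.symm, this]

theorem comm_leaf {p q r : ℝ × ℝ} {R : Sq} (hs : QSep p q R) (hp : p ∈ R.set) (hq : q ∈ R.set)
    (hr : r ∈ R.set) (h : p ≠ q) :
    qinsert p (qinsert q (.leaf r) R) R = qinsert q (qinsert p (.leaf r) R) R := by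
  by_cases hrp : r = p
  · subst hrp
    simp only [qinsert, if_true, if_neg h]
    rw [← split_symm hs hp hq h, insert_split hs hp hq h, split_symm hs hp hq h]
  by_cases hrq : r = q
  · subst hrq
    simp only [qinsert, if_true, if_neg h.symm]
    rw [split_symm hs hp hq h, insert_split (sep_of_ne hq hp h.symm) hq hp h.symm]
  induction hs with
  | here R hd =>
    simp only [qinsert, if_neg hrp, if_neg hrq]
    rw [split_eq hp hr (Ne.symm hrp), split_eq hq hr (Ne.symm hrq), qinsert_mkNode r]
    exact comm_node fun hc => absurd hc hd
  | there R hd h' ih =>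
    simp only [qinsert, if_neg hrp, if_neg hrq]
    rw [split_eq hp hr (Ne.symm hrp), split_eq hq hr (Ne.symm hrq), qinsert_mkNode r]
    refine comm_node fun _ => ?_
    by_cases hrd : R.dirOf p = R.dirOf r
    · have := ih (mem_quad hp) (hd ▸ mem_quad hq) (hrd ▸ mem_quad hr)
      rw [← hrd, Function.update_self]
      exact this
    · rw [Function.update_of_ne hrd]
      simp only [qinsert, if_neg h, if_neg h.symm]
      exact split_symm h' (mem_quad hp) (hd ▸ mem_quad hq) h

theorem comm_insert {p q : ℝ × ℝ} (h : p ≠ q) {t : QTree} {R : Sq} (ht : WF t R)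
    (hp : p ∈ R.set) (hq : q ∈ R.set) :
    qinsert p (qinsert q t R) R = qinsert q (qinsert p t R) R := by
  induction ht with
  | empty R =>
    simp only [qinsert, if_neg h, if_neg h.symm]
    exact split_symm (sep_of_ne hp hq h) hp hq h
  | leaf r R hr => exact comm_leaf (sep_of_ne hp hq h) hp hq hr h
  | internal a b c e R ha hb hc he iha ihb ihc ihe =>
    obtain ⟨f, hf⟩ := exists_mkNode a b c e
    rw [hf]
    simp only [mkNode, QTree.internal.injEq] at hf
    obtain ⟨rfl, rfl, rfl, rfl⟩ := hf
    refine comm_node fun hd => ?_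
    have h1 := mem_quad hp
    have h2 := mem_quad hq
    rw [← hd] at h2
    revert h1 h2
    cases R.dirOf p <;> assumption

theorem foldl_perm {R : Sq} {l₁ l₂ : List (ℝ × ℝ)} (hperm : l₁.Perm l₂) :
    (∀ p ∈ l₁, p ∈ R.set) → ∀ t, WF t R →
    l₁.foldl (fun t p => qinsert p t R) t = l₂.foldl (fun t p => qinsert p t R) t := by
  induction hperm with
  | nil => intros; rfl
  | cons x _ ih =>
    intro hm t ht
    simp only [List.foldl_cons]
    exact ih (fun p hp => hm p (List.mem_cons_of_mem _ hp)) _ (wf_insert _ (hm x (by simp)) ht)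
  | swap x y l =>
    intro hm t ht
    simp only [List.foldl_cons]
    by_cases h : x = y
    · rw [h]
    · rw [comm_insert h ht (hm x (by simp)) (hm y (by simp))]
  | trans h1 _ ih1 ih2 =>
    intro hm t ht
    rw [ih1 hm t ht, ih2 (fun p hp => hm p (h1.mem_iff.2 hp)) t ht]

/-- The shape of a region quadtree is independent of the order of insertions:
if `l₁` and `l₂` are duplicate-free lists of points of a half-open square `R` of side `w > 0`
such that `l₂` is a permutation of `l₁`, then folding `insert` over `l₁` starting from `empty`
yields the same tree as folding `insert` over `l₂` starting from `empty`. -/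
theorem insert_order_independent (R : Sq) (hw : 0 < R.w)
    (l₁ l₂ : List (ℝ × ℝ)) (hmem : ∀ p ∈ l₁, p ∈ R.set)
    (h₁ : l₁.Nodup) (h₂ : l₂.Nodup) (hperm : l₂.Perm l₁) :
    l₁.foldl (fun t p => qinsert p t R) .empty =
      l₂.foldl (fun t p => qinsert p t R) .empty := by
  exact foldl_perm hperm.symm hmem _ (.empty R)
end
end

section
/- For every region quadtree t well-formed for a half-open square R of side w > 0 and every point p ∈ R, contain(p, t, R) returns true if and only if p ∈ keys(t). -/
noncomputable section

open Classical in
/-- The membership query: `contain(p, empty, R) = false`; `contain(p, leaf q, R) = (q = p)`;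
on an internal node it recurses into the child in the direction of `p` in `R`, with the
corresponding quadrant as region. -/
def contain (p : ℝ × ℝ) : QTree → Sq → Bool
  | .empty, _ => false
  | .leaf q, _ => decide (q = p)
  | .internal a b c e, R =>
    match R.dirOf p with
    | .nw => contain p a (R.quad .nw)
    | .ne => contain p b (R.quad .ne)
    | .sw => contain p c (R.quad .sw)
    | .se => contain p e (R.quad .se)

theorem Sq.dirOf_eq_of_mem_quad (R : Sq) (p : ℝ × ℝ) (d : Dir)
    (hp : p ∈ (R.quad d).set) : R.dirOf p = d := by
  unfold Sq.dirOf
  cases d <;> simp only [Sq.quad, Sq.set, Set.mem_setOf_eq] at hp <;>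
    obtain ⟨h1, h2, h3, h4⟩ := hp <;> split_ifs <;> first | rfl | (exfalso; linarith)

theorem Sq.quad_subset (R : Sq) (hw : 0 < R.w) (d : Dir) : (R.quad d).set ⊆ R.set := by
  intro p hp
  cases d <;> simp only [Sq.quad, Sq.set, Set.mem_setOf_eq] at hp ⊢ <;>
    obtain ⟨h1, h2, h3, h4⟩ := hp <;> refine ⟨?_, ?_, ?_, ?_⟩ <;> linarith

theorem Sq.quad_w_pos (R : Sq) (hw : 0 < R.w) (d : Dir) : 0 < (R.quad d).w := by
  cases d <;> simp only [Sq.quad] <;> linarith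

theorem WF.keys_subset {t : QTree} {R : Sq} (ht : WF t R) (hw : 0 < R.w) :
    t.keys ⊆ R.set := by
  induction ht with
  | empty R => simp [QTree.keys]
  | leaf p R hp => simpa [QTree.keys] using hp
  | internal a b c e R ha hb hc he iha ihb ihc ihe =>
    simp only [QTree.keys, Set.union_subset_iff]
    exact ⟨⟨⟨(iha (R.quad_w_pos hw _)).trans (R.quad_subset hw _),
      (ihb (R.quad_w_pos hw _)).trans (R.quad_subset hw _)⟩,
      (ihc (R.quad_w_pos hw _)).trans (R.quad_subset hw _)⟩,
      (ihe (R.quad_w_pos hw _)).trans (R.quad_subset hw _)⟩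

/-- For every region quadtree `t` well-formed for a half-open square `R` of side
`w > 0` and every point `p ∈ R`, `contain(p, t, R)` returns `true` iff `p ∈ keys(t)`. -/
theorem contain_iff_mem_keys (R : Sq) (hw : 0 < R.w) (t : QTree) (ht : WF t R)
    (p : ℝ × ℝ) (hp : p ∈ R.set) :
    contain p t R = true ↔ p ∈ t.keys := by
  induction ht with
  | empty R => simp [contain, QTree.keys]
  | leaf q R hq => simp [contain, QTree.keys, eq_comm]
  | internal a b c e R ha hb hc he iha ihb ihc ihe =>
    have hm := R.mem_quad_dirOf p hp
    have ka : p ∈ a.keys → R.dirOf p = .nw := fun h =>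
      R.dirOf_eq_of_mem_quad p _ (ha.keys_subset (R.quad_w_pos hw _) h)
    have kb : p ∈ b.keys → R.dirOf p = .ne := fun h =>
      R.dirOf_eq_of_mem_quad p _ (hb.keys_subset (R.quad_w_pos hw _) h)
    have kc : p ∈ c.keys → R.dirOf p = .sw := fun h =>
      R.dirOf_eq_of_mem_quad p _ (hc.keys_subset (R.quad_w_pos hw _) h)
    have ke : p ∈ e.keys → R.dirOf p = .se := fun h =>
      R.dirOf_eq_of_mem_quad p _ (he.keys_subset (R.quad_w_pos hw _) h)
    replace iha := iha (R.quad_w_pos hw _)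
    replace ihb := ihb (R.quad_w_pos hw _)
    replace ihc := ihc (R.quad_w_pos hw _)
    replace ihe := ihe (R.quad_w_pos hw _)
    simp only [contain, QTree.keys, Set.mem_union]
    cases hd : R.dirOf p <;> rw [hd] at hm ka kb kc ke <;> simp_all
end
end

section
/- Compression is correct: let t be a region quadtree well-formed for a half-open square R of side w > 0, and suppose the subtree of t at some direction sequence s is an Internal node all four of whose children are Empty. Then the tree obtained from t by replacing the subtree at s with Empty is well-formed for R and has the same key set as t. -/
noncomputable section

/-- Replacing the subtree of `t` at position `s` by the tree `u`, leaving all other nodes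
unchanged (if the path `s` does not exist in `t`, the tree is returned unchanged). -/
def replaceAt : QTree → List Dir → QTree → QTree
  | _, [], u => u
  | .internal a b c e, d :: s, u =>
    match d with
    | .nw => .internal (replaceAt a s u) b c e
    | .ne => .internal a (replaceAt b s u) c e
    | .sw => .internal a b (replaceAt c s u) e
    | .se => .internal a b c (replaceAt e s u)
  | .empty, _ :: _, _ => .empty
  | .leaf q, _ :: _, _ => .leaf q

theorem compress_aux (t : QTree) (R : Sq) (ht : WF t R) : ∀ (s : List Dir),
    subtreeAt t s = some (.internal .empty .empty .empty .empty) →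
    WF (replaceAt t s .empty) R ∧ (replaceAt t s .empty).keys = t.keys := by
  induction ht with
  | empty R =>
    intro s hs
    cases s <;> simp [subtreeAt] at hs
  | leaf p R hp =>
    intro s hs
    cases s <;> simp [subtreeAt] at hs
  | internal a b c e R ha hb hc he iha ihb ihc ihe =>
    intro s hs
    cases s with
    | nil =>
      simp only [subtreeAt, Option.some.injEq] at hs
      rw [hs]
      exact ⟨by simpa [replaceAt] using WF.empty R, by simp [replaceAt, QTree.keys]⟩
    | cons d s =>
      cases d
      · obtain ⟨h1, h2⟩ := iha s (by simpa [subtreeAt] using hs)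
        exact ⟨.internal _ _ _ _ _ h1 hb hc he, by simp only [replaceAt, QTree.keys, h2]⟩
      · obtain ⟨h1, h2⟩ := ihb s (by simpa [subtreeAt] using hs)
        exact ⟨.internal _ _ _ _ _ ha h1 hc he, by simp only [replaceAt, QTree.keys, h2]⟩
      · obtain ⟨h1, h2⟩ := ihc s (by simpa [subtreeAt] using hs)
        exact ⟨.internal _ _ _ _ _ ha hb h1 he, by simp only [replaceAt, QTree.keys, h2]⟩
      · obtain ⟨h1, h2⟩ := ihe s (by simpa [subtreeAt] using hs)
        exact ⟨.internal _ _ _ _ _ ha hb hc h1, by simp only [replaceAt, QTree.keys, h2]⟩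

/-- Compression is correct: let `t` be a region quadtree well-formed for a
half-open square `R` of side `w > 0`, and suppose the subtree of `t` at some direction
sequence `s` is an internal node all four of whose children are `empty`.  Then the tree
obtained from `t` by replacing the subtree at `s` with `empty` is well-formed for `R` and
has the same key set as `t`. -/
theorem compress_correct (R : Sq) (hw : 0 < R.w) (t : QTree) (ht : WF t R)
    (s : List Dir)
    (hsub : subtreeAt t s = some (.internal .empty .empty .empty .empty)) :
    WF (replaceAt t s .empty) R ∧ (replaceAt t s .empty).keys = t.keys := by
  exact compress_aux t R ht s hsub
end
end
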